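/- arXiv:2511.15436 — 4 statements merged into one kernel-verified Lean document; each statement's English description precedes it below -/
import Mathlib

section
/- In M_F, the connected component of the zero function 0̲, the path component of 0̲, and the quasi-component of 0̲ (the intersection of all subsets of M_F containing 0̲ that are both open and closed) all coincide, and are equal to ⋂_{G ∈ 𝒜_>} L^∞_G. -/
open MeasureTheory Topology Set Pointwise

/-- The set of all real-valued measurable functions on `X`, as a subtype. -/
abbrev Mble (X : Type*) [MeasurableSpace X] : Type _ := {f : X → ℝ // Measurable f}

/-- The basic set `B(f, A, ε)`: all `g` such that for some measurable null set `N`,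
`sup_{x ∈ A \ N} |f x - g x| < ε`. -/
def FBall {X : Type*} [MeasurableSpace X] (μ : Measure X) (f : Mble X) (A : Set X)
    (ε : ℝ) : Set (Mble X) :=
  {g | ∃ N : Set X, MeasurableSet N ∧ μ N = 0 ∧
        ∃ b : ℝ, b < ε ∧ ∀ x ∈ A \ N, |f.1 x - g.1 x| ≤ b}

/-- The `F_μ`-topology on `Mble X`, generated by the sets `B(f, A, ε)` with
`A` measurable of finite measure and `ε > 0`. -/
def FTop {X : Type*} [MeasurableSpace X] (μ : Measure X) : TopologicalSpace (Mble X) :=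
  TopologicalSpace.generateFrom
    {S | ∃ (f : Mble X) (A : Set X) (ε : ℝ),
        MeasurableSet A ∧ μ A < ⊤ ∧ 0 < ε ∧ S = FBall μ f A ε}

/-- A `μ`-atom: a measurable set of positive measure admitting no decomposition into two
disjoint measurable pieces of positive measure. -/
def MuAtom {X : Type*} [MeasurableSpace X] (μ : Measure X) (A : Set X) : Prop :=
  MeasurableSet A ∧ 0 < μ A ∧
    ¬ ∃ B C : Set X, MeasurableSet B ∧ MeasurableSet C ∧ Disjoint B C ∧
        B ∪ C = A ∧ 0 < μ B ∧ 0 < μ C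

/-- `G` is a union of finitely many `μ`-atoms. -/
def FinAtomUnion {X : Type*} [MeasurableSpace X] (μ : Measure X) (G : Set X) : Prop :=
  ∃ (n : ℕ) (F : Fin n → Set X), (∀ i, MuAtom μ (F i)) ∧ G = ⋃ i, F i

/-- `L^∞_G`: the measurable functions that are essentially bounded on `G`. -/
def Linf {X : Type*} [MeasurableSpace X] (μ : Measure X) (G : Set X) : Set (Mble X) :=
  {f | ∃ M₀ : ℝ, 0 < M₀ ∧ ∃ N : Set X, MeasurableSet N ∧ μ N = 0 ∧
        ∀ x ∈ G \ N, |f.1 x| ≤ M₀}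

/-- The intersection `⋂_{G ∈ 𝒜_>} L^∞_G`. -/
def InterLinf {X : Type*} [MeasurableSpace X] (μ : Measure X) : Set (Mble X) :=
  ⋂ G ∈ {A : Set X | MeasurableSet A ∧ 0 < μ A ∧ μ A < ⊤}, Linf μ G

/-- The zero function as an element of `Mble X`. -/
def zeroM {X : Type*} [MeasurableSpace X] : Mble X := ⟨fun _ => 0, measurable_const⟩

/-- `μ` is hemifinite: some sequence in `𝒜_>` almost contains every member of `𝒜_>`. -/
def Hemifinite {X : Type*} [MeasurableSpace X] (μ : Measure X) : Prop :=
  ∃ A : ℕ → Set X, (∀ n, MeasurableSet (A n) ∧ 0 < μ (A n) ∧ μ (A n) < ⊤) ∧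
    ∀ F : Set X, MeasurableSet F → 0 < μ F → μ F < ⊤ → ∃ n, μ (F \ A n) = 0

/-- `G⁺`: functions strictly positive μ-almost everywhere on `G`. -/
def Gplus {X : Type*} [MeasurableSpace X] (μ : Measure X) (G : Set X) : Set (Mble X) :=
  {f | ∃ N : Set X, MeasurableSet N ∧ μ N = 0 ∧ ∀ x ∈ G \ N, 0 < f.1 x}

/-- `G⁰`: functions nonnegative μ-almost everywhere on `G`. -/
def Gzero {X : Type*} [MeasurableSpace X] (μ : Measure X) (G : Set X) : Set (Mble X) :=
  {f | ∃ N : Set X, MeasurableSet N ∧ μ N = 0 ∧ ∀ x ∈ G \ N, 0 ≤ f.1 x}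

instance {X : Type*} [MeasurableSpace X] : Add (Mble X) :=
  ⟨fun f g => ⟨f.1 + g.1, f.2.add g.2⟩⟩

theorem FBall_isOpen {X : Type*} [MeasurableSpace X] (μ : Measure X) (f : Mble X) (A : Set X)
    (ε : ℝ) (hA : MeasurableSet A) (hf : μ A < ⊤) (hε : 0 < ε) :
    IsOpen[FTop μ] (FBall μ f A ε) :=
  TopologicalSpace.isOpen_generateFrom_of_mem ⟨f, A, ε, hA, hf, hε, rfl⟩

theorem mem_FBall_self {X : Type*} [MeasurableSpace X] (μ : Measure X) (f : Mble X) (A : Set X) :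
    f ∈ FBall μ f A 1 :=
  ⟨∅, MeasurableSet.empty, by simp, 0, by norm_num, by simp⟩

theorem Linf_of_close {X : Type*} [MeasurableSpace X] (μ : Measure X) (f g : Mble X) (A : Set X)
    (hf : f ∈ Linf μ A)
    (h : ∃ N : Set X, MeasurableSet N ∧ μ N = 0 ∧ ∃ b : ℝ, b < 1 ∧
      ∀ x ∈ A \ N, |f.1 x - g.1 x| ≤ b) : g ∈ Linf μ A := by
  obtain ⟨M, hM, N, hN, hN0, hb⟩ := hf
  obtain ⟨N', hN', hN0', b, hb1, hb'⟩ := h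
  refine ⟨M + 1, by linarith, N ∪ N', hN.union hN', by simp [hN0, hN0'], ?_⟩
  rintro x ⟨hxA, hxN⟩
  simp only [mem_union, not_or] at hxN
  have h1 := abs_le.1 (hb x ⟨hxA, hxN.1⟩)
  have h2 := abs_le.1 (hb' x ⟨hxA, hxN.2⟩)
  exact abs_le.2 ⟨by linarith, by linarith⟩

theorem Linf_isOpen {X : Type*} [MeasurableSpace X] (μ : Measure X) (A : Set X)
    (hA : MeasurableSet A) (hf : μ A < ⊤) : IsOpen[FTop μ] (Linf μ A) := by
  letI := FTop μ
  rw [isOpen_iff_forall_mem_open]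
  intro f hfL
  exact ⟨FBall μ f A 1, fun g hg => Linf_of_close μ f g A hfL hg,
    FBall_isOpen μ f A 1 hA hf one_pos, mem_FBall_self μ f A⟩

theorem Linf_isClosed {X : Type*} [MeasurableSpace X] (μ : Measure X) (A : Set X)
    (hA : MeasurableSet A) (hf : μ A < ⊤) : IsClosed[FTop μ] (Linf μ A) := by
  letI := FTop μ
  rw [← isOpen_compl_iff, isOpen_iff_forall_mem_open]
  intro f hfL
  refine ⟨FBall μ f A 1, ?_, FBall_isOpen μ f A 1 hA hf one_pos, mem_FBall_self μ f A⟩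
  rintro g ⟨N, hN, hN0, b, hb, h⟩ hg
  exact hfL (Linf_of_close μ g f A hg ⟨N, hN, hN0, b, hb, fun x hx => by
    rw [abs_sub_comm]; exact h x hx⟩)

theorem zeroM_mem_Linf {X : Type*} [MeasurableSpace X] (μ : Measure X) (A : Set X) :
    zeroM ∈ Linf μ A :=
  ⟨1, one_pos, ∅, MeasurableSet.empty, by simp, by simp [zeroM]⟩

theorem InterLinf_bdd {X : Type*} [MeasurableSpace X] (μ : Measure X) (f : Mble X)
    (hf : f ∈ InterLinf μ) (A : Set X) (hA : MeasurableSet A) (hfin : μ A < ⊤) :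
    f ∈ Linf μ A := by
  by_cases h0 : μ A = 0
  · exact ⟨1, one_pos, A, hA, h0, by simp⟩
  · exact mem_iInter₂.1 hf A ⟨hA, pos_iff_ne_zero.2 h0, hfin⟩

/-- The scalar multiple `t f`. -/
def smulM {X : Type*} [MeasurableSpace X] (t : ℝ) (f : Mble X) : Mble X :=
  ⟨fun x => t * f.1 x, f.2.const_mul t⟩

theorem continuous_smulM {X : Type*} [MeasurableSpace X] (μ : Measure X) (f : Mble X)
    (hf : f ∈ InterLinf μ) : @Continuous ℝ (Mble X) _ (FTop μ) (fun t => smulM t f) := by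
  letI := FTop μ
  refine continuous_generateFrom_iff.2 ?_
  rintro S ⟨g, A, ε, hA, hfin, hε, rfl⟩
  rw [Metric.isOpen_iff]
  rintro t ⟨N, hN, hN0, b, hb, h⟩
  obtain ⟨M, hM, N', hN', hN0', hM'⟩ := InterLinf_bdd μ f hf A hA hfin
  have hpos : 0 < (ε - b) / (2 * M) := div_pos (by linarith) (by linarith)
  refine ⟨(ε - b) / (2 * M), hpos, ?_⟩
  intro s hs
  rw [Metric.mem_ball, Real.dist_eq] at hs
  refine ⟨N ∪ N', hN.union hN', by simp [hN0, hN0'], b + (ε - b) / 2, by linarith, ?_⟩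
  rintro x ⟨hxA, hxN⟩
  simp only [mem_union, not_or] at hxN
  have h1 := h x ⟨hxA, hxN.1⟩
  have h2 := hM' x ⟨hxA, hxN.2⟩
  simp only [smulM] at h1 ⊢
  have h3 : |(s - t) * f.1 x| ≤ (ε - b) / 2 := by
    rw [abs_mul]
    calc |s - t| * |f.1 x| ≤ (ε - b) / (2 * M) * M :=
          mul_le_mul hs.le h2 (abs_nonneg _) hpos.le
      _ = (ε - b) / 2 := by field_simp
  have h4 := abs_le.1 h1
  have h5 := abs_le.1 h3
  exact abs_le.2 ⟨by nlinarith, by nlinarith⟩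

theorem InterLinf_subset_pathComponent {X : Type*} [MeasurableSpace X] (μ : Measure X) :
    InterLinf μ ⊆ @pathComponent (Mble X) (FTop μ) zeroM := by
  letI := FTop μ
  intro f hf
  have hc := continuous_smulM μ f hf
  refine ⟨⟨⟨fun t => smulM (t : ℝ) f, hc.comp continuous_subtype_val⟩, ?_, ?_⟩⟩
  · apply Subtype.ext
    funext x
    simp [smulM, zeroM]
  · apply Subtype.ext
    funext x
    simp [smulM]

theorem quasi_subset_InterLinf {X : Type*} [MeasurableSpace X] (μ : Measure X) :
    ⋂₀ {S : Set (Mble X) | zeroM ∈ S ∧ IsOpen[FTop μ] S ∧ IsClosed[FTop μ] S} ⊆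
      InterLinf μ := by
  intro f hf
  refine mem_iInter₂.2 fun A hA => ?_
  exact hf _ ⟨zeroM_mem_Linf μ A, Linf_isOpen μ A hA.1 hA.2.2, Linf_isClosed μ A hA.1 hA.2.2⟩

theorem component_subset_quasi {X : Type*} [MeasurableSpace X] (μ : Measure X) :
    @connectedComponent (Mble X) (FTop μ) zeroM ⊆
    ⋂₀ {S : Set (Mble X) | zeroM ∈ S ∧ IsOpen[FTop μ] S ∧ IsClosed[FTop μ] S} := by
  letI := FTop μ
  rintro f hf S ⟨h0, ho, hc⟩
  exact (IsClopen.connectedComponent_subset ⟨hc, ho⟩ h0) hf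

/-- In `M_F`, the connected component, the path component and the
quasi-component of the zero function coincide and equal `⋂_{G ∈ 𝒜_>} L^∞_G`. -/
theorem stmt5 {X : Type*} [MeasurableSpace X] (μ : Measure X)
    (hpos : 0 < μ Set.univ)
    (hsub : ∀ A : Set X, MeasurableSet A → μ A = ⊤ →
      ∃ B, B ⊆ A ∧ MeasurableSet B ∧ 0 < μ B ∧ μ B < ⊤) :
    @connectedComponent (Mble X) (FTop μ) zeroM = InterLinf μ ∧
    @pathComponent (Mble X) (FTop μ) zeroM = InterLinf μ ∧
    ⋂₀ {S : Set (Mble X) | zeroM ∈ S ∧ IsOpen[FTop μ] S ∧ IsClosed[FTop μ] S} =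
      InterLinf μ := by
  have h1 := InterLinf_subset_pathComponent μ
  have h2 : @pathComponent (Mble X) (FTop μ) zeroM ⊆
      @connectedComponent (Mble X) (FTop μ) zeroM :=
    @pathComponent_subset_component (Mble X) (FTop μ) zeroM
  have h3 := component_subset_quasi μ
  have h4 := quasi_subset_InterLinf μ
  exact ⟨(h3.trans h4).antisymm (h1.trans h2), (h2.trans (h3.trans h4)).antisymm h1,
    h4.antisymm (h1.trans (h2.trans h3))⟩
end

section
/- The set of simple functions (measurable functions with finite range) is dense in M_F if and only if every A ∈ 𝒜_> can be written as a union of finitely many μ-atoms. -/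
open MeasureTheory Topology Set Pointwise

theorem finAtom_union {X : Type*} [MeasurableSpace X] (μ : Measure X) {B C : Set X}
    (hB : FinAtomUnion μ B) (hC : FinAtomUnion μ C) : FinAtomUnion μ (B ∪ C) := by
  obtain ⟨n, F, hF, rfl⟩ := hB
  obtain ⟨m, G, hG, rfl⟩ := hC
  refine ⟨n + m, Fin.append F G, ?_, ?_⟩
  · intro i
    refine Fin.addCases (fun i => ?_) (fun i => ?_) i
    · simpa using hF i
    · simpa using hG i
  · ext x
    simp only [mem_union, mem_iUnion]
    constructor
    · rintro (⟨i, hi⟩ | ⟨i, hi⟩)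
      · exact ⟨Fin.castAdd m i, by simpa using hi⟩
      · exact ⟨Fin.natAdd n i, by simpa using hi⟩
    · rintro ⟨i, hi⟩
      induction i using Fin.addCases with
      | left i => exact Or.inl ⟨i, by simpa using hi⟩
      | right i => exact Or.inr ⟨i, by simpa using hi⟩

theorem bad_step {X : Type*} [MeasurableSpace X] (μ : Measure X) (A : Set X)
    (h : MeasurableSet A ∧ 0 < μ A ∧ ¬ FinAtomUnion μ A) :
    ∃ B, (MeasurableSet B ∧ 0 < μ B ∧ ¬ FinAtomUnion μ B) ∧ B ⊆ A ∧ 0 < μ (A \ B) := by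
  obtain ⟨hA, hA0, hb⟩ := h
  have hna : ¬ MuAtom μ A := fun ha => hb ⟨1, fun _ => A, fun _ => ha, (iUnion_const A).symm⟩
  have : ∃ B C : Set X, MeasurableSet B ∧ MeasurableSet C ∧ Disjoint B C ∧
        B ∪ C = A ∧ 0 < μ B ∧ 0 < μ C := by
    by_contra hc
    exact hna ⟨hA, hA0, hc⟩
  obtain ⟨B, C, hB, hC, hd, rfl, hB0, hC0⟩ := this
  by_cases h1 : FinAtomUnion μ B
  · have h2 : ¬ FinAtomUnion μ C := fun h2 => hb (finAtom_union μ h1 h2)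
    refine ⟨C, ⟨hC, hC0, h2⟩, subset_union_right, ?_⟩
    rwa [union_diff_right, hd.sdiff_eq_left]
  · refine ⟨B, ⟨hB, hB0, h1⟩, subset_union_left, ?_⟩
    rwa [union_diff_left, hd.symm.sdiff_eq_left]

theorem dense_contra {X : Type*} [MeasurableSpace X] (μ : Measure X)
    (hd : @Dense (Mble X) (FTop μ) {f : Mble X | (Set.range f.1).Finite})
    (A : Set X) (hA : MeasurableSet A) (hA0 : 0 < μ A) (hAf : μ A < ⊤)
    (hb : ¬ FinAtomUnion μ A) : False := by
  classical
  choose! T hT using bad_step μ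
  let S : ℕ → Set X := fun n => T^[n] A
  have hS1 : ∀ n, S (n + 1) = T (S n) := fun n => Function.iterate_succ_apply' T n A
  have hS : ∀ n, MeasurableSet (S n) ∧ 0 < μ (S n) ∧ ¬ FinAtomUnion μ (S n) := by
    intro n
    induction n with
    | zero => exact ⟨hA, hA0, hb⟩
    | succ n ih => rw [hS1]; exact (hT _ ih).1
  have hanti : Antitone S := antitone_nat_of_succ_le fun n => by
    rw [hS1]; exact (hT _ (hS n)).2.1
  have hD : ∀ n, 0 < μ (S n \ S (n + 1)) := fun n => by
    rw [hS1]; exact (hT _ (hS n)).2.2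
  have hp : ∀ x, ∃ n, x ∉ S (n + 1) ∨ ∀ m, x ∈ S m := by
    intro x
    by_contra! hc
    obtain ⟨m, hm⟩ := (hc 0).2
    exact hm (hanti (Nat.le_succ m) (hc m).1)
  have hmeas : Measurable fun x => Nat.find (hp x) := by
    refine measurable_find hp fun k => ?_
    have : {x | x ∉ S (k + 1) ∨ ∀ m, x ∈ S m} = (S (k + 1))ᶜ ∪ ⋂ m, S m := by
      ext x; simp
    rw [this]
    exact (hS _).1.compl.union (MeasurableSet.iInter fun m => (hS m).1)
  let f : Mble X := ⟨fun x => ((Nat.find (hp x) : ℕ) : ℝ), measurable_from_top.comp hmeas⟩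
  have hfn : ∀ n, ∀ x ∈ S n \ S (n + 1), (n : ℝ) ≤ f.1 x := by
    intro n x hx
    refine Nat.cast_le.2 ((Nat.le_find_iff _ _).2 fun m hm => ?_)
    rintro (h | h)
    · exact h (hanti hm hx.1)
    · exact hx.2 (h _)
  letI := FTop μ
  have ho : IsOpen (FBall μ f A 1) :=
    TopologicalSpace.isOpen_generateFrom_of_mem ⟨f, A, 1, hA, hAf, one_pos, rfl⟩
  obtain ⟨g, ⟨N, hN, hN0, b, hb1, hgb⟩, hg⟩ := hd.inter_open_nonempty _ ho
    ⟨f, ∅, MeasurableSet.empty, by simp, 0, one_pos, by simp⟩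
  obtain ⟨K, hK⟩ := (Set.Finite.bddAbove hg)
  obtain ⟨n, hn⟩ := exists_nat_gt (K + 1)
  refine (hD n).ne' (measure_mono_null (fun x hx => ?_) hN0)
  by_contra hxN
  have h1 := hfn n x hx
  have h2 := hgb x ⟨hanti (Nat.zero_le n) hx.1, hxN⟩
  have h3 := hK (mem_range_self x)
  have h4 := le_abs_self (f.1 x - g.1 x)
  linarith

theorem open_aux {X : Type*} [MeasurableSpace X] (μ : Measure X) (U : Set (Mble X))
    (hU : @IsOpen _ (FTop μ) U) (f : Mble X) (hf : f ∈ U) :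
    ∃ A, MeasurableSet A ∧ μ A < ⊤ ∧ ∀ (g : Mble X) (N : Set X), MeasurableSet N → μ N = 0 →
      (∀ x ∈ A \ N, g.1 x = f.1 x) → g ∈ U := by
  change TopologicalSpace.GenerateOpen _ U at hU
  induction hU with
  | basic s hs =>
    obtain ⟨h, A, ε, hA, hAf, hε, rfl⟩ := hs
    refine ⟨A, hA, hAf, fun g N hN hN0 hg => ?_⟩
    obtain ⟨N', hN', hN0', b, hb, hfb⟩ := hf
    refine ⟨N ∪ N', hN.union hN', measure_union_null hN0 hN0', b, hb, fun x hx => ?_⟩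
    rw [hg x ⟨hx.1, fun h => hx.2 (Or.inl h)⟩]
    exact hfb x ⟨hx.1, fun h => hx.2 (Or.inr h)⟩
  | univ => exact ⟨∅, MeasurableSet.empty, by simp, fun _ _ _ _ _ => mem_univ _⟩
  | inter s t _ _ ihs iht =>
    obtain ⟨A, hA, hAf, h1⟩ := ihs hf.1
    obtain ⟨B, hB, hBf, h2⟩ := iht hf.2
    refine ⟨A ∪ B, hA.union hB, measure_union_lt_top hAf hBf, fun g N hN hN0 hg => ⟨?_, ?_⟩⟩
    · exact h1 g N hN hN0 fun x hx => hg x ⟨Or.inl hx.1, hx.2⟩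
    · exact h2 g N hN hN0 fun x hx => hg x ⟨Or.inr hx.1, hx.2⟩
  | sUnion S _ ih =>
    obtain ⟨s, hs, hfs⟩ := hf
    obtain ⟨A, hA, hAf, h⟩ := ih s hs hfs
    exact ⟨A, hA, hAf, fun g N hN hN0 hg => ⟨s, hs, h g N hN hN0 hg⟩⟩

theorem atom_const {X : Type*} [MeasurableSpace X] (μ : Measure X) (F : Set X)
    (hF : MuAtom μ F) (f : Mble X) : ∃ c : ℝ, μ {x ∈ F | f.1 x ≠ c} = 0 := by
  obtain ⟨hFm, _, hFa⟩ := hF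
  have key : ∀ U : Set ℝ, MeasurableSet U →
      (∀ᵐ x ∂(μ.restrict F), f.1 x ∈ U) ∨ (∀ᵐ x ∂(μ.restrict F), f.1 x ∉ U) := by
    intro U hU
    have hm : MeasurableSet (f.1 ⁻¹' U) := f.2 hU
    by_contra! hc
    refine hFa ⟨F ∩ f.1 ⁻¹' U, F \ f.1 ⁻¹' U, hFm.inter hm, hFm.diff hm,
      disjoint_sdiff_inter.symm, inter_union_diff _ _, ?_, ?_⟩
    · refine pos_iff_ne_zero.2 fun h0 => hc.2 ?_
      rw [ae_restrict_iff' hFm, ae_iff]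
      refine measure_mono_null (fun x hx => ?_) h0
      simpa using hx
    · refine pos_iff_ne_zero.2 fun h0 => hc.1 ?_
      rw [ae_restrict_iff' hFm, ae_iff]
      refine measure_mono_null (fun x hx => ?_) h0
      simpa using hx
  obtain ⟨c, hc⟩ := Filter.exists_eventuallyEq_const_of_forall_separating
    (l := ae (μ.restrict F)) (f := f.1) MeasurableSet key
  refine ⟨c, ?_⟩
  have hc' : ∀ᵐ x ∂(μ.restrict F), f.1 x = c := hc
  rw [ae_restrict_iff' hFm, ae_iff] at hc'
  refine measure_mono_null (fun x hx => ?_) hc'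
  simpa using hx

theorem simple_aux {X : Type*} [MeasurableSpace X] (μ : Measure X)
    (h : ∀ A : Set X, MeasurableSet A → 0 < μ A → μ A < ⊤ → FinAtomUnion μ A)
    (f : Mble X) (A : Set X) (hA : MeasurableSet A) (hAf : μ A < ⊤) :
    ∃ s : Mble X, (range s.1).Finite ∧ ∃ N, MeasurableSet N ∧ μ N = 0 ∧
      ∀ x ∈ A \ N, s.1 x = f.1 x := by
  classical
  rcases eq_or_ne (μ A) 0 with h0 | h0
  · refine ⟨zeroM, (finite_singleton (0 : ℝ)).subset ?_, A, hA, h0, by simp⟩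
    rintro _ ⟨x, rfl⟩
    rfl
  obtain ⟨n, F, hF, rfl⟩ := h A hA (pos_iff_ne_zero.2 h0) hAf
  choose c hc using fun i => atom_const μ (F i) (hF i) f
  have hm : MeasurableSet (f.1 ⁻¹' (range c)) := f.2 (finite_range c).measurableSet
  refine ⟨⟨(f.1 ⁻¹' (range c)).indicator f.1, f.2.indicator hm⟩,
    ((finite_range c).insert 0).subset ?_, (⋃ i, F i) \ f.1 ⁻¹' (range c), hA.diff hm, ?_, ?_⟩
  · rintro _ ⟨x, rfl⟩
    by_cases hx : x ∈ f.1 ⁻¹' (range c)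
    · right
      simp only [indicator_of_mem hx]; exact hx
    · left
      simp only [indicator_of_notMem hx]
  · refine measure_mono_null (fun x hx => ?_) (measure_iUnion_null hc)
    obtain ⟨i, hi⟩ := mem_iUnion.1 hx.1
    exact mem_iUnion.2 ⟨i, hi, fun he => hx.2 ⟨i, he.symm⟩⟩
  · intro x hx
    refine indicator_of_mem ?_ _
    by_contra hn
    exact hx.2 ⟨hx.1, hn⟩

/-- the simple functions (measurable functions of finite range) are dense
in `M_F` iff every `A ∈ 𝒜_>` is a finite union of `μ`-atoms. -/
theorem stmt8 {X : Type*} [MeasurableSpace X] (μ : Measure X)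
    (hpos : 0 < μ Set.univ)
    (hsub : ∀ A : Set X, MeasurableSet A → μ A = ⊤ →
      ∃ B, B ⊆ A ∧ MeasurableSet B ∧ 0 < μ B ∧ μ B < ⊤) :
    @Dense (Mble X) (FTop μ) {f : Mble X | (Set.range f.1).Finite} ↔
      ∀ A : Set X, MeasurableSet A → 0 < μ A → μ A < ⊤ → FinAtomUnion μ A := by
  classical
  constructor
  · intro hd A hA hA0 hAf
    by_contra hbad
    exact dense_contra μ hd A hA hA0 hAf hbad
  · intro h
    letI := FTop μ
    rw [dense_iff_inter_open]
    rintro U hU ⟨f, hf⟩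
    obtain ⟨A, hA, hAf, hAU⟩ := open_aux μ U hU f hf
    obtain ⟨s, hs, N, hN, hN0, heq⟩ := simple_aux μ h f A hA hAf
    exact ⟨s, hAU s N hN hN0 heq, hs⟩
end

section
/- The set of μ-integrable functions (f ∈ M with ∫_X |f| dμ < ∞) is dense in M_F if and only if every A ∈ 𝒜_> can be written as a union of finitely many μ-atoms. -/
open MeasureTheory Topology Set Pointwise

theorem aux_open {X : Type*} [MeasurableSpace X] (μ : Measure X) (U : Set (Mble X))
    (hU : @IsOpen _ (FTop μ) U) (f : Mble X) (hf : f ∈ U) :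
    ∃ A : Set X, MeasurableSet A ∧ μ A < ⊤ ∧ ∀ g : Mble X, (∀ x ∈ A, g.1 x = f.1 x) → g ∈ U := by
  have hU' : TopologicalSpace.GenerateOpen {S | ∃ (f : Mble X) (A : Set X) (ε : ℝ),
        MeasurableSet A ∧ μ A < ⊤ ∧ 0 < ε ∧ S = FBall μ f A ε} U := hU
  clear hU
  induction hU' with
  | basic s hs =>
    obtain ⟨f₀, A, ε, hA, hAf, hε, rfl⟩ := hs
    refine ⟨A, hA, hAf, fun g hg => ?_⟩
    obtain ⟨N, hN, hN0, b, hb, h⟩ := hf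
    refine ⟨N, hN, hN0, b, hb, fun x hx => ?_⟩
    rw [hg x hx.1]
    exact h x hx
  | univ => exact ⟨∅, MeasurableSet.empty, by simp, fun _ _ => trivial⟩
  | inter s t _ _ ihs iht =>
    obtain ⟨A, hA, hAf, h1⟩ := ihs hf.1
    obtain ⟨B, hB, hBf, h2⟩ := iht hf.2
    exact ⟨A ∪ B, hA.union hB, measure_union_lt_top hAf hBf, fun g hg =>
      ⟨h1 g fun x hx => hg x (Or.inl hx), h2 g fun x hx => hg x (Or.inr hx)⟩⟩
  | sUnion S _ ih =>
    obtain ⟨s, hs, hfs⟩ := hf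
    obtain ⟨A, hA, hAf, h⟩ := ih s hs hfs
    exact ⟨A, hA, hAf, fun g hg => ⟨s, hs, h g hg⟩⟩

theorem aux_atom {X : Type*} [MeasurableSpace X] (μ : Measure X) (A : Set X)
    (hA : MuAtom μ A) (f : X → ℝ) (hf : Measurable f) :
    ∃ n : ℕ, ∀ᵐ x ∂(μ.restrict A), ‖f x‖ ≤ n := by
  obtain ⟨hAm, hpos, hno⟩ := hA
  have hm : ∀ n : ℕ, MeasurableSet {x | ‖f x‖ ≤ n} := fun n =>
    measurableSet_le hf.norm measurable_const
  have : ∃ n : ℕ, 0 < μ (A ∩ {x | ‖f x‖ ≤ n}) := by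
    by_contra! h
    have h0 : μ (⋃ n : ℕ, A ∩ {x | ‖f x‖ ≤ n}) = 0 :=
      measure_iUnion_null fun n => le_antisymm (h n) bot_le
    have : (⋃ n : ℕ, A ∩ {x | ‖f x‖ ≤ n}) = A := by
      rw [← inter_iUnion]
      apply inter_eq_left.2
      intro x _
      exact mem_iUnion.2 (exists_nat_ge ‖f x‖)
    rw [this] at h0
    exact hpos.ne' h0
  obtain ⟨n, hn⟩ := this
  refine ⟨n, ?_⟩
  have h0 : μ (A \ {x | ‖f x‖ ≤ n}) = 0 := by
    by_contra h
    exact hno ⟨_, _, hAm.inter (hm n), hAm.diff (hm n), disjoint_sdiff_inter.symm,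
      inter_union_diff _ _, hn, pos_iff_ne_zero.2 h⟩
  rw [ae_restrict_iff' hAm]
  rw [ae_iff]
  convert h0 using 2
  ext x
  simp

theorem aux_union {X : Type*} [MeasurableSpace X] (μ : Measure X) (A B : Set X)
    (hA : FinAtomUnion μ A) (hB : FinAtomUnion μ B) : FinAtomUnion μ (A ∪ B) := by
  obtain ⟨n, F, hF, rfl⟩ := hA
  obtain ⟨m, G, hG, rfl⟩ := hB
  refine ⟨n + m, Fin.append F G, fun i => ?_, ?_⟩
  · induction i using Fin.addCases with
    | left i => simpa using hF i
    | right i => simpa using hG i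
  · ext x
    simp only [mem_union, mem_iUnion]
    constructor
    · rintro (⟨i, h⟩ | ⟨i, h⟩)
      · exact ⟨Fin.castAdd m i, by simpa using h⟩
      · exact ⟨Fin.natAdd n i, by simpa using h⟩
    · rintro ⟨i, h⟩
      induction i using Fin.addCases with
      | left i => exact Or.inl ⟨i, by simpa using h⟩
      | right i => exact Or.inr ⟨i, by simpa using h⟩

theorem aux_split {X : Type*} [MeasurableSpace X] (μ : Measure X) (B : Set X)
    (hB : MeasurableSet B) (hpos : 0 < μ B) (hno : ¬ FinAtomUnion μ B) :
    ∃ C, C ⊆ B ∧ (MeasurableSet C ∧ 0 < μ C ∧ ¬ FinAtomUnion μ C) ∧ 0 < μ (B \ C) := by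
  have h1 : ¬ MuAtom μ B := fun h => hno ⟨1, fun _ => B, fun _ => h, by simp [iUnion_const]⟩
  have h2 : ∃ B' C : Set X, MeasurableSet B' ∧ MeasurableSet C ∧ Disjoint B' C ∧
        B' ∪ C = B ∧ 0 < μ B' ∧ 0 < μ C := by
    by_contra h
    exact h1 ⟨hB, hpos, h⟩
  obtain ⟨C, D, hC, hD, hd, rfl, hC0, hD0⟩ := h2
  by_cases h : FinAtomUnion μ C
  · refine ⟨D, subset_union_right, ⟨hD, hD0, fun h' => hno (aux_union μ _ _ h h')⟩, ?_⟩
    rwa [union_diff_right, hd.sdiff_eq_left]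
  · refine ⟨C, subset_union_left, ⟨hC, hC0, h⟩, ?_⟩
    rwa [union_diff_left, hd.symm.sdiff_eq_left]

theorem aux_seq {X : Type*} [MeasurableSpace X] (μ : Measure X) (A : Set X)
    (hA : MeasurableSet A) (hpos : 0 < μ A) (hno : ¬ FinAtomUnion μ A) :
    ∃ D : ℕ → Set X, (∀ n, MeasurableSet (D n) ∧ D n ⊆ A ∧ 0 < μ (D n)) ∧
      Pairwise (Function.onFun Disjoint D) := by
  let T := {B : Set X // MeasurableSet B ∧ 0 < μ B ∧ ¬ FinAtomUnion μ B}
  have step : ∀ B : T, ∃ C : T, C.1 ⊆ B.1 ∧ 0 < μ (B.1 \ C.1) := by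
    rintro ⟨B, h1, h2, h3⟩
    obtain ⟨C, hC, h, h'⟩ := aux_split μ B h1 h2 h3
    exact ⟨⟨C, h⟩, hC, h'⟩
  choose nx hnx1 hnx2 using step
  let S : ℕ → T := fun n => nx^[n] ⟨A, hA, hpos, hno⟩
  have hS : ∀ n, S (n + 1) = nx (S n) := fun n => Function.iterate_succ_apply' _ _ _
  have hanti : Antitone fun n => (S n).1 := antitone_nat_of_succ_le fun n => by
    rw [hS]; exact hnx1 _
  refine ⟨fun n => (S n).1 \ (S (n + 1)).1, fun n => ⟨(S n).2.1.diff (S (n+1)).2.1,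
    diff_subset.trans (hanti (Nat.zero_le n)), ?_⟩, ?_⟩
  · beta_reduce; rw [hS]; exact hnx2 _
  · have key : ∀ m n, m < n → Disjoint ((S m).1 \ (S (m + 1)).1) ((S n).1 \ (S (n + 1)).1) := by
      intro m n hmn
      rw [Set.disjoint_left]
      intro x hx hx'
      exact hx.2 (hanti (Nat.succ_le_of_lt hmn) hx'.1)
    intro m n hmn
    rcases lt_or_gt_of_ne hmn with h | h
    · exact key m n h
    · exact (key n m h).symm

theorem aux_fun {X : Type*} [MeasurableSpace X] (μ : Measure X) (A : Set X)
    (hA : MeasurableSet A) (hpos : 0 < μ A) (hfin : μ A < ⊤) (hno : ¬ FinAtomUnion μ A) :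
    ∃ f : X → ℝ, Measurable f ∧ ∫⁻ x in A, ‖f x‖ₑ ∂μ = ⊤ := by
  obtain ⟨D, hD, hdis⟩ := aux_seq μ A hA hpos hno
  let F : X → ENNReal := fun x => ∑' n, (D n).indicator (fun _ => (μ (D n))⁻¹) x
  have hFm : Measurable F := Measurable.ennreal_tsum fun n =>
    measurable_const.indicator (hD n).1
  have hFf : ∀ x, F x ≠ ⊤ := by
    intro x
    by_cases hx : ∃ n, x ∈ D n
    · obtain ⟨n, hn⟩ := hx
      have : F x = (D n).indicator (fun _ => (μ (D n))⁻¹) x := by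
        apply tsum_eq_single
        intro m hm
        apply indicator_of_notMem
        intro h
        exact Set.disjoint_left.1 (hdis hm) h hn
      rw [this, indicator_of_mem hn]
      exact ENNReal.inv_ne_top.2 (hD n).2.2.ne'
    · push Not at hx
      have : F x = 0 := by
        simp only [F]
        rw [ENNReal.tsum_eq_zero]
        exact fun n => indicator_of_notMem (hx n) _
      simp [this]
  refine ⟨fun x => (F x).toReal, hFm.ennreal_toReal, ?_⟩
  have : ∀ x, ‖(F x).toReal‖ₑ = F x := fun x => by
    rw [Real.enorm_eq_ofReal ENNReal.toReal_nonneg, ENNReal.ofReal_toReal (hFf x)]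
  simp_rw [this]
  simp only [F]
  rw [lintegral_tsum fun n => (measurable_const.indicator (hD n).1).aemeasurable]
  have h1 : ∀ n, ∫⁻ x in A, (D n).indicator (fun _ => (μ (D n))⁻¹) x ∂μ = 1 := by
    intro n
    rw [lintegral_indicator_const (hD n).1, Measure.restrict_apply (hD n).1,
      inter_eq_left.2 (hD n).2.1]
    exact ENNReal.inv_mul_cancel (hD n).2.2.ne' ((measure_mono (hD n).2.1).trans_lt hfin).ne
  simp_rw [h1]
  exact ENNReal.tsum_const_eq_top_of_ne_zero one_ne_zero

/-- the `μ`-integrable functions are dense in `M_F` iff every `A ∈ 𝒜_>`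
is a finite union of `μ`-atoms. -/
theorem stmt9 {X : Type*} [MeasurableSpace X] (μ : Measure X)
    (hpos : 0 < μ Set.univ)
    (hsub : ∀ A : Set X, MeasurableSet A → μ A = ⊤ →
      ∃ B, B ⊆ A ∧ MeasurableSet B ∧ 0 < μ B ∧ μ B < ⊤) :
    @Dense (Mble X) (FTop μ) {f : Mble X | HasFiniteIntegral f.1 μ} ↔
      ∀ A : Set X, MeasurableSet A → 0 < μ A → μ A < ⊤ → FinAtomUnion μ A := by
  constructor
  · intro hd A hA hA0 hAf
    by_contra hno
    obtain ⟨f, hf, hint⟩ := aux_fun μ A hA hA0 hAf hno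
    have hopen : @IsOpen _ (FTop μ) (FBall μ ⟨f, hf⟩ A 1) :=
      TopologicalSpace.GenerateOpen.basic _ ⟨⟨f, hf⟩, A, 1, hA, hAf, one_pos, rfl⟩
    have hmem : (⟨f, hf⟩ : Mble X) ∈ FBall μ ⟨f, hf⟩ A 1 :=
      ⟨∅, MeasurableSet.empty, by simp, 0, one_pos, by simp⟩
    obtain ⟨g, hg, hgi⟩ := @Dense.inter_open_nonempty _ (FTop μ) _ hd _ hopen ⟨_, hmem⟩
    obtain ⟨N, hN, hN0, b, hb, h⟩ := hg
    have hle : ∫⁻ x in A, ‖f x‖ₑ ∂μ ≤ ∫⁻ x in A, (‖g.1 x‖ₑ + 1) ∂μ := by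
      apply lintegral_mono_ae
      rw [ae_restrict_iff' hA]
      filter_upwards [measure_eq_zero_iff_ae_notMem.1 hN0] with x hx hxA
      have h1 := h x ⟨hxA, hx⟩
      have h2 : |f x| ≤ |g.1 x| + 1 := by
        have := abs_sub_abs_le_abs_sub (f x) (g.1 x)
        simp only at h1
        linarith
      rw [← ofReal_norm_eq_enorm, ← ofReal_norm_eq_enorm, ← ENNReal.ofReal_one,
        ← ENNReal.ofReal_add (norm_nonneg _) zero_le_one]
      exact ENNReal.ofReal_le_ofReal h2
    rw [hint, lintegral_add_right _ measurable_const] at hle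
    have h3 : ∫⁻ x in A, ‖g.1 x‖ₑ ∂μ < ⊤ := lt_of_le_of_lt (setLIntegral_le_lintegral _ _) hgi
    have h4 : ∫⁻ x in A, 1 ∂μ < ⊤ := by simpa using hAf
    exact absurd (ENNReal.add_lt_top.2 ⟨h3, h4⟩) (not_lt.2 hle)
  · intro H
    rw [@dense_iff_inter_open _ (FTop μ)]
    rintro U hU ⟨f, hf⟩
    obtain ⟨A, hA, hAf, h⟩ := aux_open μ U hU f hf
    refine ⟨⟨A.indicator f.1, f.2.indicator hA⟩, h _ fun x hx => indicator_of_mem hx _, ?_⟩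
    have hI : IntegrableOn f.1 A μ := by
      rcases eq_or_ne (μ A) 0 with h0 | h0
      · rw [IntegrableOn, Measure.restrict_eq_zero.2 h0]
        exact integrable_zero_measure
      · obtain ⟨n, F, hF, rfl⟩ := H A hA (pos_iff_ne_zero.2 h0) hAf
        rw [integrableOn_finite_iUnion]
        intro i
        obtain ⟨k, hk⟩ := aux_atom μ (F i) (hF i) f.1 f.2
        exact Measure.integrableOn_of_bounded
          ((measure_mono (subset_iUnion F i)).trans_lt hAf).ne f.2.aestronglyMeasurable hk
    exact ((integrable_indicator_iff hA).2 hI).2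
end

section
/- The measure μ is hemifinite if and only if the space M_F is first countable. -/
open MeasureTheory Topology Set Pointwise

theorem FBall_mono' {X : Type*} [MeasurableSpace X] (μ : Measure X) (f : Mble X)
    {A B : Set X} (hA : MeasurableSet A) (hB : MeasurableSet B) (h : μ (A \ B) = 0)
    {ε δ : ℝ} (hδ : δ ≤ ε) : FBall μ f B δ ⊆ FBall μ f A ε := by
  rintro g ⟨N, hN, hN0, b, hb, hg⟩
  refine ⟨N ∪ (A \ B), hN.union (hA.diff hB), measure_union_null hN0 h, b, by linarith, ?_⟩
  rintro x ⟨hx, hx'⟩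
  simp only [mem_union, mem_diff, not_or, not_and, not_not] at hx'
  exact hg x ⟨hx'.2 hx, hx'.1⟩

theorem FBall_self' {X : Type*} [MeasurableSpace X] (μ : Measure X) (f : Mble X)
    (A : Set X) {ε : ℝ} (hε : 0 < ε) : f ∈ FBall μ f A ε :=
  ⟨∅, MeasurableSet.empty, measure_empty, 0, hε, fun x _ => by simp⟩

theorem FTop_mem_nhds {X : Type*} [MeasurableSpace X] (μ : Measure X) (f : Mble X)
    (U : Set (Mble X)) : U ∈ @nhds _ (FTop μ) f ↔
      ∃ (A : Set X) (ε : ℝ), MeasurableSet A ∧ μ A < ⊤ ∧ 0 < ε ∧ FBall μ f A ε ⊆ U := by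
  letI := FTop μ
  rw [mem_nhds_iff]
  constructor
  · rintro ⟨S, hSU, hS, hf⟩
    suffices H : ∃ (A : Set X) (ε : ℝ), MeasurableSet A ∧ μ A < ⊤ ∧ 0 < ε ∧
        FBall μ f A ε ⊆ S by
      obtain ⟨A, ε, h1, h2, h3, h4⟩ := H
      exact ⟨A, ε, h1, h2, h3, h4.trans hSU⟩
    clear hSU
    have hS' : TopologicalSpace.GenerateOpen _ S := hS
    clear hS
    induction hS' with
    | basic s hs =>
      obtain ⟨h, A, ε, hA, hA', hε, rfl⟩ := hs
      obtain ⟨N, hN, hN0, b, hb, hf⟩ := hf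
      refine ⟨A, ε - b, hA, hA', by linarith, ?_⟩
      rintro g ⟨N', hN', hN0', b', hb', hg⟩
      refine ⟨N ∪ N', hN.union hN', measure_union_null hN0 hN0', b + b', by linarith, ?_⟩
      rintro x ⟨hx, hx'⟩
      simp only [mem_union, not_or] at hx'
      have h1 := hf x ⟨hx, hx'.1⟩
      have h2 := hg x ⟨hx, hx'.2⟩
      have h3 := abs_sub_le (h.1 x) (f.1 x) (g.1 x)
      linarith
    | univ => exact ⟨∅, 1, MeasurableSet.empty, by simp, one_pos, subset_univ _⟩
    | inter s t _ _ ihs iht =>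
      obtain ⟨A, ε, h1, h2, h3, h4⟩ := ihs hf.1
      obtain ⟨B, δ, k1, k2, k3, k4⟩ := iht hf.2
      refine ⟨A ∪ B, min ε δ, h1.union k1, measure_union_lt_top h2 k2, lt_min h3 k3,
        subset_inter ?_ ?_⟩
      · exact (FBall_mono' μ f h1 (h1.union k1) (by simp [← diff_diff])
          (min_le_left _ _)).trans h4
      · exact (FBall_mono' μ f k1 (h1.union k1)
          (by rw [diff_eq_empty.2 subset_union_right]; simp) (min_le_right _ _)).trans k4
    | sUnion T _ ih =>
      obtain ⟨t, ht, hft⟩ := hf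
      obtain ⟨A, ε, h1, h2, h3, h4⟩ := ih t ht hft
      exact ⟨A, ε, h1, h2, h3, h4.trans (subset_sUnion_of_mem ht)⟩
  · rintro ⟨A, ε, h1, h2, h3, h4⟩
    exact ⟨_, h4, TopologicalSpace.GenerateOpen.basic _ ⟨f, A, ε, h1, h2, h3, rfl⟩,
      FBall_self' μ f A h3⟩

/-- `μ` is hemifinite iff `M_F` is first countable. -/
theorem stmt16 {X : Type*} [MeasurableSpace X] (μ : Measure X)
    (hpos : 0 < μ Set.univ)
    (hsub : ∀ A : Set X, MeasurableSet A → μ A = ⊤ →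
      ∃ B, B ⊆ A ∧ MeasurableSet B ∧ 0 < μ B ∧ μ B < ⊤) :
    Hemifinite μ ↔ @FirstCountableTopology (Mble X) (FTop μ) := by
  letI := FTop μ
  constructor
  · rintro ⟨A, hA, hF⟩
    refine ⟨fun f => ?_⟩
    refine Filter.HasCountableBasis.isCountablyGenerated (ι := ℕ × ℕ) (p := fun _ => True)
      (s := fun i => FBall μ f (A i.1) (1 / ((i.2 : ℝ) + 1))) ⟨⟨fun U => ?_⟩, to_countable _⟩
    rw [FTop_mem_nhds]
    constructor
    · rintro ⟨B, ε, h1, h2, h3, h4⟩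
      obtain ⟨m, hm⟩ := exists_nat_one_div_lt h3
      have : ∃ n, μ (B \ A n) = 0 := by
        rcases eq_or_ne (μ B) 0 with h | h
        · exact ⟨0, measure_mono_null diff_subset h⟩
        · exact hF B h1 (pos_iff_ne_zero.2 h) h2
      obtain ⟨n, hn⟩ := this
      exact ⟨(n, m), trivial, (FBall_mono' μ f h1 (hA n).1 hn hm.le).trans h4⟩
    · rintro ⟨⟨n, m⟩, -, h⟩
      exact ⟨A n, 1 / ((m : ℝ) + 1), (hA n).1, (hA n).2.2, by positivity, h⟩
  · intro hfc
    obtain ⟨C, hC, hC0, hC1⟩ : ∃ C, MeasurableSet C ∧ 0 < μ C ∧ μ C < ⊤ := by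
      rcases eq_or_ne (μ univ) ⊤ with h | h
      · obtain ⟨B, -, hB⟩ := hsub univ MeasurableSet.univ h
        exact ⟨B, hB⟩
      · exact ⟨univ, MeasurableSet.univ, hpos, lt_top_iff_ne_top.2 h⟩
    obtain ⟨U, hU⟩ := (nhds (zeroM : Mble X)).exists_antitone_basis
    have h := fun n => (FTop_mem_nhds μ zeroM (U n)).1 (hU.1.mem_of_mem trivial)
    choose A ε h1 h2 h3 h4 using h
    refine ⟨fun n => A n ∪ C, fun n => ⟨(h1 n).union hC,
      hC0.trans_le (measure_mono subset_union_right), measure_union_lt_top (h2 n) hC1⟩, ?_⟩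
    intro F hF _ hF1
    obtain ⟨n, -, hn⟩ := hU.1.mem_iff.1
      ((FTop_mem_nhds μ zeroM _).2 ⟨F, 1, hF, hF1, one_pos, Subset.rfl⟩)
    refine ⟨n, measure_mono_null (diff_subset_diff_right subset_union_left) ?_⟩
    let g : Mble X := ⟨(A n)ᶜ.indicator (fun _ => 1), measurable_const.indicator (h1 n).compl⟩
    have hg : g ∈ FBall μ zeroM (A n) (ε n) := by
      refine ⟨∅, MeasurableSet.empty, measure_empty, 0, h3 n, fun x hx => ?_⟩
      simp [g, zeroM, hx.1]
    obtain ⟨N, hN, hN0, b, hb, hgN⟩ := hn (h4 n hg)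
    refine measure_mono_null (fun x hx => ?_) hN0
    by_contra hxN
    have := hgN x ⟨hx.1, hxN⟩
    simp [g, zeroM, hx.2] at this
    linarith
end
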